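/- arXiv:2406.04715 — 2 statements merged into one kernel-verified Lean document; each statement's English description precedes it below -/
import Mathlib

section
/- For every τ ∈ 𝒯, the subset X_τ generates PSL(2,ℂ) as a group, i.e. the subgroup of PSL(2,ℂ) generated by X_τ is all of PSL(2,ℂ). -/
/-!
`X_τ` is conjugation-invariant, because the trace is, so the subgroup it generates is normal
(it is the normal closure of `X_τ`). It is nontrivial, since the companion matrix
`!![t, -1; 1, 0]` has trace `t` and is not scalar. As `PSL(2,ℂ)` is simple
(`Matrix.ProjectiveSpecialLinearGroup.rank_two_simple'`), this subgroup is everything.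
-/

open Matrix

abbrev SL2C := Matrix.SpecialLinearGroup (Fin 2) ℂ

/-- `PSL(2,ℂ) = SL(2,ℂ)/{±I}` (the center of `SL(2,ℂ)` is `{±I}`). -/
abbrev PSL2C := Matrix.ProjectiveSpecialLinearGroup (Fin 2) ℂ

/-- The subspace topology on `SL(2,ℂ)` from the `2×2` complex matrices;
`PSL(2,ℂ)` then carries the quotient topology. -/
noncomputable instance : TopologicalSpace SL2C :=
  TopologicalSpace.induced (fun A => (A : Matrix (Fin 2) (Fin 2) ℂ)) inferInstance

/-- The projection `π : SL(2,ℂ) → PSL(2,ℂ)`. -/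
def prSL : SL2C →* PSL2C := QuotientGroup.mk' (Subgroup.center SL2C)

/-- `X_τ` for `τ = [t]`: the nontrivial elements of `PSL(2,ℂ)` admitting a lift of
trace `t` or `−t`. -/
def XtauP (t : ℂ) : Set PSL2C :=
  {f | f ≠ 1 ∧ ∃ A : SL2C, prSL A = f ∧
    (Matrix.trace (A : Matrix (Fin 2) (Fin 2) ℂ) = t ∨
     Matrix.trace (A : Matrix (Fin 2) (Fin 2) ℂ) = -t)}

/-- `H_[2]`: the image in `PSL(2,ℂ)` of the upper unitriangular matrices. -/
def HparP : Set PSL2C :=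
  {f | ∃ B : SL2C, prSL B = f ∧ ∃ v : ℂ, (B : Matrix (Fin 2) (Fin 2) ℂ) = !![1, v; 0, 1]}

/-- `H_τ` for `τ ∉ {[0],[2]}`: the image in `PSL(2,ℂ)` of the diagonal matrices. -/
def HdiagP : Set PSL2C :=
  {f | ∃ B : SL2C, prSL B = f ∧
    ∃ μ : ℂ, μ ≠ 0 ∧ (B : Matrix (Fin 2) (Fin 2) ℂ) = !![μ, 0; 0, μ⁻¹]}

/-- `H_[0]`: the image in `PSL(2,ℂ)` of the diagonal and antidiagonal matrices. -/
def HzeroP : Set PSL2C :=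
  HdiagP ∪ {f | ∃ B : SL2C, prSL B = f ∧
    ∃ μ : ℂ, μ ≠ 0 ∧ (B : Matrix (Fin 2) (Fin 2) ℂ) = !![0, μ; -μ⁻¹, 0]}

lemma conj_mem_XtauP {t : ℂ} {f : PSL2C} (hf : f ∈ XtauP t) (g : PSL2C) :
    g * f * g⁻¹ ∈ XtauP t := by
  obtain ⟨hne, A, rfl, hA⟩ := hf
  obtain ⟨B, rfl⟩ : ∃ B, prSL B = g := QuotientGroup.mk'_surjective _ g
  refine ⟨by simpa [conj_eq_one_iff] using hne, B * A * B⁻¹, by simp only [map_mul, map_inv], ?_⟩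
  have htr : Matrix.trace ((B * A * B⁻¹ : SL2C) : Matrix (Fin 2) (Fin 2) ℂ)
      = Matrix.trace (A : Matrix (Fin 2) (Fin 2) ℂ) := by
    rw [Matrix.SpecialLinearGroup.coe_mul, Matrix.trace_mul_comm,
      ← Matrix.SpecialLinearGroup.coe_mul, inv_mul_cancel_left]
  rwa [htr]

/-- The element of `SL(2,ℂ)` with characteristic polynomial `x² - t x + 1` given by the
companion matrix; it has trace `t`. -/
def companionSL (t : ℂ) : SL2C := ⟨!![t, -1; 1, 0], by simp [Matrix.det_fin_two]⟩

lemma prSL_companionSL_mem (t : ℂ) : prSL (companionSL t) ∈ XtauP t := by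
  refine ⟨fun h => ?_, companionSL t, rfl, Or.inl (by simp [companionSL, Matrix.trace_fin_two])⟩
  have hc : companionSL t ∈ Subgroup.center SL2C := (QuotientGroup.eq_one_iff _).1 h
  obtain ⟨r, -, hr⟩ := Matrix.SpecialLinearGroup.mem_center_iff.1 hc
  -- the lower left entry is `0` for a scalar matrix and `1` for the companion matrix
  simpa [companionSL] using congr_fun₂ hr 1 0

/-- for every `τ ∈ 𝒯`, the subset `X_τ` generates `PSL(2,ℂ)` as a group. -/
theorem Xtau_generates_PSL2C (t : ℂ) : Subgroup.closure (XtauP t) = ⊤ := by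
  have : IsSimpleGroup PSL2C :=
    Matrix.ProjectiveSpecialLinearGroup.rank_two_simple' ⟨2, by norm_num, by norm_num⟩
  have hnc : Subgroup.closure (XtauP t) = Subgroup.normalClosure (XtauP t) := by
    refine le_antisymm Subgroup.closure_le_normalClosure (Subgroup.closure_mono fun x hx => ?_)
    obtain ⟨f, hf, hfx⟩ := Group.mem_conjugatesOfSet_iff.1 hx
    obtain ⟨g, rfl⟩ := isConj_iff.1 hfx
    exact conj_mem_XtauP hf g
  have hmem := prSL_companionSL_mem t
  have hn : (Subgroup.closure (XtauP t)).Normal := hnc ▸ Subgroup.normalClosure_normal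
  refine hn.eq_bot_or_eq_top.resolve_left fun hbot => hmem.1 ?_
  exact Subgroup.mem_bot.1 (hbot ▸ Subgroup.subset_closure hmem)
end

section
/- Let Γ be a Kleinian group and γ a nontrivial element of Γ. Let τ ∈ 𝒯 be the class of the trace of a lift of γ (so γ ∈ X_τ), and let f ∈ PSL(2,ℂ) satisfy fγf⁻¹ = f_τ (such f exists). Let σ_τ be the automorphism x ↦ f_τ⁻¹ x f_τ of PSL(2,ℂ). Then the map ψ : Q(Γ,γ) → Q(PSL(2,ℂ), H_τ, σ_τ) sending the coset C_Γ(γ)·g to the coset H_τ·(fgf⁻¹) is a well-defined injective quandle homomorphism. -/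
/-!
The point is that `H_τ` is exactly the centralizer of `f_τ` in `PSL(2,ℂ)`. Two elements
`π(C)`, `π(B)` commute iff `CB = ±BC` (`prSL_commute_iff`); solving this for the normal forms
`B` gives `H_[2]`, `H_τ` and `H_[0]` respectively. The minus sign forces `tr B = 0`, so it
contributes only for `τ = [0]`, where it yields the antidiagonal matrices.

Since `f γ f⁻¹ = f_τ`, conjugation by `f` carries the centralizer of `γ` in `PSL(2,ℂ)` onto
`H_τ`, so `g h⁻¹` centralizes `γ` iff `(f g f⁻¹)(f h f⁻¹)⁻¹ ∈ H_τ`. One direction makes `ψ`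
well defined, the other makes it injective. The quandle operations correspond because
conjugation by `f` is an automorphism taking `γ` to `f_τ`.
-/

open Matrix

theorem prSL_eq_iff (A B : SL2C) :
    prSL A = prSL B ↔ (B : Matrix (Fin 2) (Fin 2) ℂ) = A ∨
      (B : Matrix (Fin 2) (Fin 2) ℂ) = -(A : Matrix (Fin 2) (Fin 2) ℂ) := by
  have key : prSL A = prSL B ↔ A⁻¹ * B ∈ Subgroup.center SL2C := QuotientGroup.eq
  rw [key, Matrix.SpecialLinearGroup.mem_center_iff]
  constructor
  · rintro ⟨r, hr, h⟩
    have hB : (B : Matrix (Fin 2) (Fin 2) ℂ) = A * (Matrix.scalar (Fin 2) r) := by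
      rw [h, ← Matrix.SpecialLinearGroup.coe_mul, mul_inv_cancel_left]
    have hr' : r = 1 ∨ r = -1 := by
      rw [← sq_eq_one_iff]
      simpa using hr
    rcases hr' with rfl | rfl
    · left
      simpa using hB
    · right
      rw [hB, map_neg, map_one, mul_neg, mul_one]
  · rintro (h | h)
    · have : B = A := Subtype.ext h
      exact ⟨1, by simp, by simp [this]⟩
    · have : B = -A := Subtype.ext (by simpa using h)
      exact ⟨-1, by simp, by rw [this, map_neg, map_one]; simp⟩

theorem prSL_commute_iff (C B : SL2C) :
    prSL C * prSL B = prSL B * prSL C ↔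
      ((C : Matrix (Fin 2) (Fin 2) ℂ) * B = B * C ∨
        (C : Matrix (Fin 2) (Fin 2) ℂ) * B = -((B : Matrix (Fin 2) (Fin 2) ℂ) * C)) := by
  rw [← map_mul, ← map_mul, eq_comm, prSL_eq_iff]
  simp

theorem prSL_surjective : Function.Surjective prSL := QuotientGroup.mk'_surjective _

theorem exists_entries (C : SL2C) : ∃ a b c d : ℂ, a * d - b * c = 1 ∧
    (C : Matrix (Fin 2) (Fin 2) ℂ) = !![a, b; c, d] := by
  refine ⟨C.1 0 0, C.1 0 1, C.1 1 0, C.1 1 1, ?_, Matrix.eta_fin_two _⟩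
  rw [← Matrix.det_fin_two]
  exact C.2

theorem mem_HparP_iff {B : SL2C} (hB : (B : Matrix (Fin 2) (Fin 2) ℂ) = !![1, 1; 0, 1])
    (x : PSL2C) : x ∈ HparP ↔ x * prSL B = prSL B * x := by
  constructor
  · rintro ⟨C, rfl, v, hC⟩
    rw [prSL_commute_iff, hB, hC]
    left
    ext i j
    fin_cases i <;> fin_cases j <;> simp [Matrix.mul_apply, Fin.sum_univ_two]
    ring
  · obtain ⟨C, rfl⟩ := prSL_surjective x
    obtain ⟨a, b, c, d, hdet, hC⟩ := exists_entries C
    rw [prSL_commute_iff, hB, hC]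
    rintro (h | h)
    · simp at h
      obtain ⟨hc, had⟩ : c = 0 ∧ a = d := by grind
      subst hc had
      have ha : a = 1 ∨ a = -1 := by
        rw [← sq_eq_one_iff]
        linear_combination hdet
      rcases ha with rfl | rfl
      · exact ⟨C, rfl, b, hC⟩
      · -- Here the lift `C` is minus a unitriangular matrix, so `-C` is the required lift.
        refine ⟨-C, ?_, -b, ?_⟩
        · rw [prSL_eq_iff]
          right
          simp
        · simp [hC]
    · simp at h
      grind

theorem mem_HdiagP_commute {lam : ℂ} {B : SL2C}
    (hB : (B : Matrix (Fin 2) (Fin 2) ℂ) = !![lam, 0; 0, lam⁻¹]) {x : PSL2C}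
    (hx : x ∈ HdiagP) : x * prSL B = prSL B * x := by
  obtain ⟨C, rfl, μ, hμ, hC⟩ := hx
  rw [prSL_commute_iff, hB, hC]
  left
  simp [mul_comm]

/-- For `λ ≠ ±1`, i.e. trace different from `±2`, an element commuting with `π(diag(λ, λ⁻¹))`
is diagonal, or `λ + λ⁻¹ = 0` and it is antidiagonal. -/
theorem commute_diag {lam : ℂ} (hlam : lam ≠ 0) (h2 : lam + lam⁻¹ ≠ 2) (h2' : lam + lam⁻¹ ≠ -2)
    {B : SL2C} (hB : (B : Matrix (Fin 2) (Fin 2) ℂ) = !![lam, 0; 0, lam⁻¹]) {x : PSL2C}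
    (hx : x * prSL B = prSL B * x) :
    x ∈ HdiagP ∨ (lam + lam⁻¹ = 0 ∧ x ∈ HzeroP) := by
  obtain ⟨C, rfl⟩ := prSL_surjective x
  obtain ⟨a, b, c, d, hdet, hC⟩ := exists_entries C
  rw [prSL_commute_iff, hB, hC] at hx
  have hne : lam ≠ lam⁻¹ := by
    intro h
    have hsq : lam ^ 2 = 1 := by
      rw [sq]
      nth_rewrite 2 [h]
      exact mul_inv_cancel₀ hlam
    rcases sq_eq_one_iff.mp hsq with rfl | rfl
    · exact h2 (by norm_num)
    · exact h2' (by norm_num)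
  have diag : b = 0 → c = 0 → prSL C ∈ HdiagP := by
    rintro rfl rfl
    have had : a * d = 1 := by linear_combination hdet
    exact ⟨C, rfl, a, left_ne_zero_of_mul_eq_one had, by
      rw [hC, eq_inv_of_mul_eq_one_right had]⟩
  rcases hx with h | h
  · simp at h
    exact Or.inl (diag (by grind) (by grind))
  · simp at h
    obtain ⟨⟨h1, h2⟩, h3, h4⟩ := h
    have ha : a = 0 := by grind
    have hd : d = 0 := by
      have := inv_ne_zero hlam
      grind
    subst ha hd
    have hbc : b * (-c) = 1 := by linear_combination hdet
    have hb : b ≠ 0 := left_ne_zero_of_mul_eq_one hbc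
    refine Or.inr ⟨?_, Or.inr ⟨C, rfl, b, hb, ?_⟩⟩
    · refine (mul_eq_zero.mp ?_).resolve_left hb
      linear_combination h2
    · rw [hC, ← eq_inv_of_mul_eq_one_right hbc, neg_neg]

theorem mem_HzeroP_commute {lam : ℂ} (h0 : lam + lam⁻¹ = 0) {B : SL2C}
    (hB : (B : Matrix (Fin 2) (Fin 2) ℂ) = !![lam, 0; 0, lam⁻¹]) {x : PSL2C}
    (hx : x ∈ HzeroP) : x * prSL B = prSL B * x := by
  rcases hx with hx | ⟨C, rfl, μ, hμ, hC⟩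
  · exact mem_HdiagP_commute hB hx
  · rw [prSL_commute_iff, hB, hC, eq_neg_of_add_eq_zero_right h0]
    right
    simp [mul_comm]

/-- for a Kleinian group `Γ`, a nontrivial `γ ∈ Γ` with lift `A` of trace
`t` (so `γ ∈ X_τ`, `τ = [t]`), and `f ∈ PSL(2,ℂ)` with `fγf⁻¹ = f_τ`, the map
`ψ : Q(Γ,γ) → Q(PSL(2,ℂ), H_τ, σ_τ)`, `C_Γ(γ)·g ↦ H_τ·(fgf⁻¹)`, is a well-defined
injective quandle homomorphism. -/
theorem injective_hom_to_triplet_quandle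
    (Γ : Subgroup PSL2C) (hΓ : DiscreteTopology Γ) (γ : Γ) (hγ : γ ≠ 1)
    (t : ℂ) (A : SL2C) (hA : prSL A = (γ : PSL2C))
    (htr : Matrix.trace (A : Matrix (Fin 2) (Fin 2) ℂ) = t)
    (ftau : PSL2C) (H : Subgroup PSL2C)
    (hcase2 : (t = 2 ∨ t = -2) →
      (∃ B : SL2C, prSL B = ftau ∧ (B : Matrix (Fin 2) (Fin 2) ℂ) = !![1, 1; 0, 1]) ∧
      (H : Set PSL2C) = HparP)
    (hcaseOther : t ≠ 2 → t ≠ -2 →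
      (∃ lam : ℂ, lam ≠ 0 ∧ lam + lam⁻¹ = t ∧
        ∃ B : SL2C, prSL B = ftau ∧
          (B : Matrix (Fin 2) (Fin 2) ℂ) = !![lam, 0; 0, lam⁻¹]) ∧
      (t ≠ 0 → (H : Set PSL2C) = HdiagP) ∧ (t = 0 → (H : Set PSL2C) = HzeroP))
    (f : PSL2C) (hconj : f * γ * f⁻¹ = ftau) :
    ∃ ψ : Quotient (QuotientGroup.rightRel (Subgroup.centralizer {γ})) →
          Quotient (QuotientGroup.rightRel H),
      (∀ g : Γ, ψ (Quotient.mk (QuotientGroup.rightRel (Subgroup.centralizer {γ})) g)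
        = Quotient.mk (QuotientGroup.rightRel H) (f * g * f⁻¹)) ∧
      Function.Injective ψ ∧
      (∀ x y : Γ,
        ψ (Quotient.mk (QuotientGroup.rightRel (Subgroup.centralizer {γ}))
            (γ⁻¹ * (x * y⁻¹) * γ * y))
          = Quotient.mk (QuotientGroup.rightRel H)
            (ftau⁻¹ * ((f * x * f⁻¹) * (f * y * f⁻¹)⁻¹) * ftau * (f * y * f⁻¹))) := by
  have hH : ∀ x : PSL2C, x ∈ H ↔ x * ftau = ftau * x := by
    intro x
    rw [← SetLike.mem_coe]
    by_cases ht : t = 2 ∨ t = -2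
    · obtain ⟨⟨B, rfl, hB⟩, hHe⟩ := hcase2 ht
      rw [hHe]
      exact mem_HparP_iff hB x
    · push Not at ht
      obtain ⟨⟨lam, hlam, hsum, B, rfl, hB⟩, hne, heq⟩ := hcaseOther ht.1 ht.2
      have hcomm := commute_diag (x := x) hlam (hsum ▸ ht.1) (hsum ▸ ht.2) hB
      by_cases h0 : t = 0
      · rw [heq h0]
        exact ⟨mem_HzeroP_commute (hsum.trans h0) hB,
          fun hx => (hcomm hx).elim Or.inl And.right⟩
      · rw [hne h0]
        exact ⟨mem_HdiagP_commute hB,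
          fun hx => (hcomm hx).resolve_right fun h => h0 (hsum ▸ h.1)⟩
  have hrel : ∀ a b : Γ, QuotientGroup.rightRel (Subgroup.centralizer {γ}) a b ↔
      QuotientGroup.rightRel H (f * a * f⁻¹) (f * b * f⁻¹) := by
    intro a b
    rw [QuotientGroup.rightRel_apply, QuotientGroup.rightRel_apply, hH, ← hconj,
      Subgroup.mem_centralizer_singleton_iff, Subtype.ext_iff]
    have e1 : f * b * f⁻¹ * (f * a * f⁻¹)⁻¹ * (f * γ * f⁻¹)
        = f * ((b : PSL2C) * (a : PSL2C)⁻¹ * γ) * f⁻¹ := by group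
    have e2 : f * γ * f⁻¹ * (f * b * f⁻¹ * (f * a * f⁻¹)⁻¹)
        = f * ((γ : PSL2C) * (b * (a : PSL2C)⁻¹)) * f⁻¹ := by group
    rw [e1, e2, mul_left_inj, mul_right_inj]
    simp
  refine ⟨Quotient.map (fun g : Γ => f * g * f⁻¹) fun a b h => (hrel a b).1 h,
    fun g => rfl, ?_, ?_⟩
  · rintro ⟨a⟩ ⟨b⟩ h
    exact Quotient.sound ((hrel a b).2 (Quotient.exact h))
  · intro x y
    subst hconj
    refine congrArg (Quotient.mk (QuotientGroup.rightRel H)) ?_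
    push_cast
    group
end
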